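/- Let n ≥ 1 and let R be a preorder (a reflexive transitive relation) on Fin n. Let A(R) be the algebra of n×n complex matrices T with T i j = 0 whenever ¬ R i j, and let Lat A(R) be the lattice of subspaces U of ℂⁿ with T(U) ⊆ U for every T ∈ A(R). For x ∈ Fin n let e_x denote the x-th standard basis vector and set L_x := ⨆{U ∈ Lat A(R) : e_x ∉ U}. Then: (a) for every x, L_x is a meet-irreducible element of Lat A(R) different from ℂⁿ; (b) every meet-irreducible element of Lat A(R) different from ℂⁿ equals L_x for some x; and (c) for all x, y ∈ Fin n, L_x ⊆ L_y if and only if R x y. Consequently x ↦ L_x induces an order isomorphism from the antisymmetrization (quotient partial order) of (Fin n, R) onto the partially ordered set of meet-irreducible elements of Lat A(R) other than ℂⁿ, ordered by inclusion. -/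

import Mathlib

noncomputable section

/-- The digraph algebra `A(R)` : the `n × n` complex matrices supported on the
edges of the (reflexive, transitive) relation `R`. -/
def digraphAlg (n : ℕ) (R : Fin n → Fin n → Prop) : Set (Matrix (Fin n) (Fin n) ℂ) :=
  {T | ∀ i j, ¬ R i j → T i j = 0}

/-- `Lat 𝒜` : the lattice of subspaces of `ℂⁿ` invariant under every `T ∈ 𝒜`. -/
def latMat (n : ℕ) (𝒜 : Set (Matrix (Fin n) (Fin n) ℂ)) : Set (Submodule ℂ (Fin n → ℂ)) :=
  {U | ∀ T ∈ 𝒜, ∀ x ∈ U, T.mulVec x ∈ U}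

/-- The meet-irreducible members of a family `S` of subspaces, other than `ℂⁿ`. -/
def meetIrrIn (n : ℕ) (S : Set (Submodule ℂ (Fin n → ℂ))) : Set (Submodule ℂ (Fin n → ℂ)) :=
  {M | M ∈ S ∧ M ≠ ⊤ ∧ ∀ L₁ ∈ S, ∀ L₂ ∈ S, M = L₁ ⊓ L₂ → M = L₁ ∨ M = L₂}

/-- `L_x := ⨆ {U ∈ Lat A(R) : e_x ∉ U}`. -/
def Lx (n : ℕ) (R : Fin n → Fin n → Prop) (x : Fin n) : Submodule ℂ (Fin n → ℂ) :=
  sSup {U | U ∈ latMat n (digraphAlg n R) ∧ (Pi.single x 1 : Fin n → ℂ) ∉ U}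

/-!
Multiplying `v ∈ U` by a matrix unit `E_{ij}` with `R i j` shows that an invariant subspace `U`
contains `e_i` as soon as some `v ∈ U` has `v j ≠ 0`. Hence invariant subspaces are coordinate
subspaces, and `L_x` consists of the vectors vanishing on `{j | R x j}`. Since `L_x` is itself
invariant and omits `e_x`, an invariant `U` satisfies `U ≤ L_x ↔ e_x ∉ U`. This makes `L_x`
meet-irreducible, gives `L_x ≤ L_y ↔ e_y ∉ L_x ↔ R x y`, and exhibits every invariant `M` as
the finite meet of the `L_x` with `e_x ∉ M`.
-/

section MeetIrreducible

variable {α : Type*} [SemilatticeInf α] [OrderTop α]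

/-- The elements `M ≠ ⊤` of `S` that are meet-irreducible relative to meets of elements of `S`.
Unlike for `InfIrred`, the ambient meet is used, and `S` is an arbitrary set rather than a
semilattice; `meetIrrIn` is the case of subspaces of `ℂⁿ`. -/
def meetIrreduciblesIn (S : Set α) : Set α :=
  {M | M ∈ S ∧ M ≠ ⊤ ∧ ∀ L₁ ∈ S, ∀ L₂ ∈ S, M = L₁ ⊓ L₂ → M = L₁ ∨ M = L₂}

theorem exists_eq_of_mem_meetIrreduciblesIn_of_eq_finset_inf {β : Type*} {S : Set α}
    (hS : InfClosed S) {M : α} (hM : M ∈ meetIrreduciblesIn S) {s : Finset β} {f : β → α}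
    (hf : ∀ i ∈ s, f i ∈ S) (hMs : M = s.inf f) : ∃ i ∈ s, M = f i := by
  have hs : s.Nonempty := by
    rw [Finset.nonempty_iff_ne_empty]
    rintro rfl
    exact hM.2.1 hMs
  induction hs using Finset.Nonempty.cons_induction with
  | singleton a => exact ⟨a, Finset.mem_singleton_self a, by rwa [Finset.inf_singleton] at hMs⟩
  | cons a s ha hs ih =>
    rw [Finset.forall_mem_cons] at hf
    rw [Finset.inf_cons] at hMs
    rcases hM.2.2 _ hf.1 _ (hS.finsetInf_mem hs hf.2) hMs with h | h
    · exact ⟨a, Finset.mem_cons_self a s, h⟩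
    · obtain ⟨i, hi, hMi⟩ := ih hf.2 h
      exact ⟨i, Finset.mem_cons_of_mem hi, hMi⟩

end MeetIrreducible

theorem exists_quot_equiv_range_of_le_iff {ι α : Type*} [PartialOrder α] {R : ι → ι → Prop}
    {f : ι → α} (hf : ∀ x y, f x ≤ f y ↔ R x y) :
    ∃ φ : Quot (fun x y ↦ R x y ∧ R y x) ≃ Set.range f, ∀ x, (φ (Quot.mk _ x) : α) = f x := by
  have hker : ∀ x y, R x y ∧ R y x ↔ Setoid.ker f x y := fun x y ↦ by
    rw [Setoid.ker_def, ← hf, ← hf, le_antisymm_iff]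
  exact ⟨(Quot.congrRight hker).trans (Setoid.quotientKerEquivRange f), fun _ ↦ rfl⟩

section VanishingOn

variable {ι K : Type*} [Semiring K] {s : Set ι}

variable (K) in
/-- The coordinate subspace of the vectors that vanish at every index in `s`. -/
def vanishingOn (s : Set ι) : Submodule K (ι → K) :=
  Submodule.pi s fun _ ↦ ⊥

theorem mem_vanishingOn {v : ι → K} : v ∈ vanishingOn K s ↔ ∀ j ∈ s, v j = 0 := by
  simp only [vanishingOn, Submodule.mem_pi, Submodule.mem_bot]

theorem single_one_mem_vanishingOn [DecidableEq ι] [Nontrivial K] {x : ι} :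
    (Pi.single x 1 : ι → K) ∈ vanishingOn K s ↔ x ∉ s := by
  rw [mem_vanishingOn]
  refine ⟨fun h hx ↦ one_ne_zero (α := K) ?_, fun hx j hj ↦ ?_⟩
  · rw [← h x hx, Pi.single_eq_same]
  · exact Pi.single_eq_of_ne (ne_of_mem_of_not_mem hj hx) 1

end VanishingOn

section Definitions

variable {ι : Type*} (K : Type*) [Semiring K]

/-- The matrices over `K` supported on the relation `R`; `digraphAlg` is the case of
`ℂ` and `Fin n`. -/
def digraphAlgebra (R : ι → ι → Prop) : Set (Matrix ι ι K) :=
  {T | ∀ i j, ¬ R i j → T i j = 0}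

variable {K} in
/-- `Lat 𝒜`, the subspaces invariant under every matrix in `𝒜`, as a plain set of subspaces;
`latMat` is the case of `ℂ` and `Fin n`. -/
def invariantSubspaces [Fintype ι] (𝒜 : Set (Matrix ι ι K)) : Set (Submodule K (ι → K)) :=
  {U | ∀ T ∈ 𝒜, ∀ v ∈ U, T.mulVec v ∈ U}

/-- `L_x`, the supremum of the invariant subspaces of the digraph algebra that omit the basis
vector `e_x`; `Lx` is the case of `ℂ` and `Fin n`. -/
def avoidingSup [Fintype ι] [DecidableEq ι] (R : ι → ι → Prop) (x : ι) : Submodule K (ι → K) :=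
  sSup {U | U ∈ invariantSubspaces (digraphAlgebra K R) ∧ (Pi.single x 1 : ι → K) ∉ U}

end Definitions

section InvariantSubspaces

variable {ι K : Type*} [Fintype ι] [Semiring K]

theorem infClosed_invariantSubspaces (𝒜 : Set (Matrix ι ι K)) :
    InfClosed (invariantSubspaces 𝒜) :=
  fun _ hU _ hV T hT v hv ↦ ⟨hU T hT v hv.1, hV T hT v hv.2⟩

theorem vanishingOn_mem_invariantSubspaces {R : ι → ι → Prop} {s : Set ι}
    (hs : ∀ i ∈ s, ∀ j, R i j → j ∈ s) :
    vanishingOn K s ∈ invariantSubspaces (digraphAlgebra K R) := by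
  intro T hT v hv
  rw [mem_vanishingOn] at hv ⊢
  intro i hi
  rw [Matrix.mulVec, dotProduct]
  refine Finset.sum_eq_zero fun j _ ↦ ?_
  by_cases hij : R i j
  · rw [hv j (hs i hi j hij), mul_zero]
  · rw [hT i j hij, zero_mul]

end InvariantSubspaces

section DigraphAlgebra

variable {ι K : Type*} [Fintype ι] [DecidableEq ι] [DivisionSemiring K] {R : ι → ι → Prop}
  {U : Submodule K (ι → K)}

theorem single_one_mem_of_apply_ne_zero (hU : U ∈ invariantSubspaces (digraphAlgebra K R))
    {v : ι → K} (hv : v ∈ U) {i j : ι} (hij : R i j) (hj : v j ≠ 0) :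
    (Pi.single i 1 : ι → K) ∈ U := by
  have hT : Matrix.single i j (v j)⁻¹ ∈ digraphAlgebra K R := by
    intro a b hab
    apply Matrix.single_apply_of_ne
    rintro ⟨rfl, rfl⟩
    exact hab hij
  have hTv : (Matrix.single i j (v j)⁻¹).mulVec v = Pi.single i 1 := by
    rw [Matrix.single_mulVec, inv_mul_cancel₀ hj, Pi.single]
  exact hTv ▸ hU _ hT v hv

theorem le_vanishingOn_of_single_one_notMem
    (hU : U ∈ invariantSubspaces (digraphAlgebra K R)) {x : ι}
    (hx : (Pi.single x 1 : ι → K) ∉ U) : U ≤ vanishingOn K {j | R x j} := by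
  intro v hv
  rw [mem_vanishingOn]
  intro j hxj
  by_contra hj
  exact hx (single_one_mem_of_apply_ne_zero hU hv hxj hj)

theorem eq_vanishingOn_of_mem_invariantSubspaces (hrefl : ∀ i, R i i)
    (hU : U ∈ invariantSubspaces (digraphAlgebra K R)) :
    U = vanishingOn K {j | (Pi.single j 1 : ι → K) ∉ U} := by
  apply le_antisymm
  · intro v hv
    rw [mem_vanishingOn]
    intro j hj
    exact mem_vanishingOn.1 (le_vanishingOn_of_single_one_notMem hU hj hv) j (hrefl j)
  · intro v hv
    rw [mem_vanishingOn] at hv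
    rw [pi_eq_sum_univ' v]
    refine U.sum_mem fun j _ ↦ ?_
    by_cases hj : (Pi.single j 1 : ι → K) ∈ U
    · exact U.smul_mem _ hj
    · rw [hv j hj, zero_smul]
      exact U.zero_mem

variable (hrefl : ∀ i, R i i) (htrans : ∀ i j k, R i j → R j k → R i k)
include hrefl htrans

theorem avoidingSup_eq_vanishingOn (x : ι) : avoidingSup K R x = vanishingOn K {j | R x j} := by
  apply le_antisymm
  · exact sSup_le fun U hU ↦ le_vanishingOn_of_single_one_notMem hU.1 hU.2
  · refine le_sSup ⟨vanishingOn_mem_invariantSubspaces fun i hi j ↦ htrans x i j hi, ?_⟩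
    rw [single_one_mem_vanishingOn, not_not]
    exact hrefl x

theorem single_one_mem_avoidingSup {x y : ι} :
    (Pi.single y 1 : ι → K) ∈ avoidingSup K R x ↔ ¬ R x y := by
  rw [avoidingSup_eq_vanishingOn hrefl htrans, single_one_mem_vanishingOn, Set.mem_ofPred_eq]

theorem avoidingSup_mem_invariantSubspaces (x : ι) :
    avoidingSup K R x ∈ invariantSubspaces (digraphAlgebra K R) := by
  rw [avoidingSup_eq_vanishingOn hrefl htrans]
  exact vanishingOn_mem_invariantSubspaces fun i hi j ↦ htrans x i j hi

theorem le_avoidingSup_iff (hU : U ∈ invariantSubspaces (digraphAlgebra K R)) {x : ι} :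
    U ≤ avoidingSup K R x ↔ (Pi.single x 1 : ι → K) ∉ U :=
  ⟨fun h hx ↦ (single_one_mem_avoidingSup hrefl htrans).1 (h hx) (hrefl x),
    fun hx ↦ le_sSup ⟨hU, hx⟩⟩

theorem avoidingSup_le_avoidingSup_iff {x y : ι} :
    avoidingSup K R x ≤ avoidingSup K R y ↔ R x y := by
  rw [le_avoidingSup_iff hrefl htrans (avoidingSup_mem_invariantSubspaces hrefl htrans x),
    single_one_mem_avoidingSup hrefl htrans, not_not]

theorem avoidingSup_mem_meetIrreduciblesIn (x : ι) :
    avoidingSup K R x ∈ meetIrreduciblesIn (invariantSubspaces (digraphAlgebra K R)) := by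
  have hx : (Pi.single x 1 : ι → K) ∉ avoidingSup K R x := fun h ↦
    (single_one_mem_avoidingSup hrefl htrans).1 h (hrefl x)
  refine ⟨avoidingSup_mem_invariantSubspaces hrefl htrans x,
    fun h ↦ hx (h ▸ Submodule.mem_top), fun L₁ hL₁ L₂ hL₂ h ↦ ?_⟩
  rw [h, Submodule.mem_inf, not_and_or, ← le_avoidingSup_iff hrefl htrans hL₁,
    ← le_avoidingSup_iff hrefl htrans hL₂] at hx
  exact hx.imp (h.le.trans inf_le_left).antisymm (h.le.trans inf_le_right).antisymm

open Classical in
theorem eq_inf_avoidingSup (hU : U ∈ invariantSubspaces (digraphAlgebra K R)) :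
    U = ({x | (Pi.single x 1 : ι → K) ∉ U} : Finset ι).inf (avoidingSup K R) := by
  apply le_antisymm
  · refine Finset.le_inf fun x hx ↦ (le_avoidingSup_iff hrefl htrans hU).2 ?_
    exact (Finset.mem_filter_univ x).1 hx
  · intro v hv
    rw [Submodule.mem_finsetInf] at hv
    rw [eq_vanishingOn_of_mem_invariantSubspaces hrefl hU, mem_vanishingOn]
    intro x hx
    have hvx := hv x ((Finset.mem_filter_univ x).2 hx)
    rw [avoidingSup_eq_vanishingOn hrefl htrans, mem_vanishingOn] at hvx
    exact hvx x (hrefl x)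

theorem exists_eq_avoidingSup_of_mem_meetIrreduciblesIn
    (hU : U ∈ meetIrreduciblesIn (invariantSubspaces (digraphAlgebra K R))) :
    ∃ x, U = avoidingSup K R x := by
  classical
  obtain ⟨x, -, hx⟩ := exists_eq_of_mem_meetIrreduciblesIn_of_eq_finset_inf
    (infClosed_invariantSubspaces _) hU
    (fun x _ ↦ avoidingSup_mem_invariantSubspaces hrefl htrans x)
    (eq_inf_avoidingSup hrefl htrans hU.1)
  exact ⟨x, hx⟩

theorem range_avoidingSup :
    Set.range (avoidingSup K R) = meetIrreduciblesIn (invariantSubspaces (digraphAlgebra K R)) := by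
  ext M
  constructor
  · rintro ⟨x, rfl⟩
    exact avoidingSup_mem_meetIrreduciblesIn hrefl htrans x
  · intro hM
    obtain ⟨x, rfl⟩ := exists_eq_avoidingSup_of_mem_meetIrreduciblesIn hrefl htrans hM
    exact ⟨x, rfl⟩

end DigraphAlgebra

theorem digraph_algebra_meet_irreducibles_general {ι K : Type*} [Fintype ι] [DecidableEq ι]
    [DivisionSemiring K] (R : ι → ι → Prop)
    (hrefl : ∀ i, R i i) (htrans : ∀ i j k, R i j → R j k → R i k) :
    (∀ x, avoidingSup K R x ∈ meetIrreduciblesIn (invariantSubspaces (digraphAlgebra K R))) ∧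
    (∀ M ∈ meetIrreduciblesIn (invariantSubspaces (digraphAlgebra K R)),
      ∃ x, M = avoidingSup K R x) ∧
    (∀ x y, avoidingSup K R x ≤ avoidingSup K R y ↔ R x y) ∧
    ∃ φ : Quot (fun x y ↦ R x y ∧ R y x) ≃
        {M // M ∈ meetIrreduciblesIn (invariantSubspaces (digraphAlgebra K R))},
      (∀ x, (φ (Quot.mk _ x) : Submodule K (ι → K)) = avoidingSup K R x) ∧
      (∀ x y, R x y ↔
        (φ (Quot.mk _ x) : Submodule K (ι → K)) ≤ (φ (Quot.mk _ y) : Submodule K (ι → K))) := by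
  have hle : ∀ x y, avoidingSup K R x ≤ avoidingSup K R y ↔ R x y := fun _ _ ↦
    avoidingSup_le_avoidingSup_iff hrefl htrans
  refine ⟨avoidingSup_mem_meetIrreduciblesIn hrefl htrans,
    fun _ ↦ exists_eq_avoidingSup_of_mem_meetIrreduciblesIn hrefl htrans, hle, ?_⟩
  obtain ⟨φ, hφ⟩ := exists_quot_equiv_range_of_le_iff hle
  rw [← range_avoidingSup hrefl htrans]
  exact ⟨φ, hφ, fun x y ↦ by rw [hφ, hφ, hle]⟩

/-- **Proposition 3.6 (verification).** For the digraph algebra `A(R)` of a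
preorder `R` on `Fin n`, the map `x ↦ L_x` identifies the antisymmetrization
of `(Fin n, R)` order-isomorphically with the set of meet-irreducible elements
of `Lat A(R)` other than `ℂⁿ`, ordered by inclusion; in particular every `L_x`
is meet-irreducible (≠ ℂⁿ), every such meet-irreducible element is some `L_x`,
and `L_x ⊆ L_y ↔ R x y`. -/
theorem digraph_algebra_meet_irreducibles
    (n : ℕ) (hn : 1 ≤ n) (R : Fin n → Fin n → Prop)
    (hrefl : ∀ i, R i i) (htrans : ∀ i j k, R i j → R j k → R i k) :
    (∀ x : Fin n, Lx n R x ∈ meetIrrIn n (latMat n (digraphAlg n R))) ∧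
    (∀ M ∈ meetIrrIn n (latMat n (digraphAlg n R)), ∃ x : Fin n, M = Lx n R x) ∧
    (∀ x y : Fin n, Lx n R x ≤ Lx n R y ↔ R x y) ∧
    ∃ φ : Quot (fun x y : Fin n => R x y ∧ R y x) ≃
        {M : Submodule ℂ (Fin n → ℂ) // M ∈ meetIrrIn n (latMat n (digraphAlg n R))},
      (∀ x : Fin n, (φ (Quot.mk _ x) : Submodule ℂ (Fin n → ℂ)) = Lx n R x) ∧
      (∀ x y : Fin n, R x y ↔
        (φ (Quot.mk _ x) : Submodule ℂ (Fin n → ℂ)) ≤ (φ (Quot.mk _ y) : Submodule ℂ (Fin n → ℂ))) :=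
  digraph_algebra_meet_irreducibles_general R hrefl htrans
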